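/- arXiv:2208.07030 — 2 statements merged into one kernel-verified Lean document; each statement's English description precedes it below -/
import Mathlib

section
/- Let (μ̂, ν̂) solve the perturbed two-point boundary value problem μ̂' = Fμ̂ - GQG*ν̂ + l_μ, -ν̂' = F*ν̂ + H*R^{-1}Hμ̂ - l_ν, μ̂(t0) = -Π0 ν̂(t0), ν̂(T) = ΣT μ̂(T), and set r(t) := μ̂(t) + Π(t)ν̂(t). Then r satisfies the forward linear ODE r'(t) = (F(t) - Π(t)H*(t)R(t)^{-1}H(t)) r(t) + Π(t) l_ν(t) + l_μ(t) with r(t0) = 0. -/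
/-!
Pointwise, `(μ + Πν)' = μ' + Π'ν + Πν'` collapses to the claimed right-hand side: substituting the
Riccati equation and the boundary value problem, the terms `GQG*ν` and `ΠF*ν` cancel, leaving
`F(μ + Πν) - ΠH*R⁻¹H(μ + Πν) + Πlν + lμ` (`rhs_identity`). At `t0` the boundary condition
`μ(t0) = -Π0 ν(t0)` gives the value `0`.

The Carathéodory setting makes the product rule the only analytic point. Functions which are
integrals of an integrable function (`IsPrimitiveOn`) are closed under sums and products, with the
usual derivatives; for products (`IsPrimitiveOn.mul`) this is integration by parts for absolutely
continuous functions. Applying these closure rules to each coordinate `μᵢ + ∑ⱼ Πᵢⱼ νⱼ` also yields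
the integrability of the right-hand side as a whole, without estimating its terms separately.
-/

open MeasureTheory Matrix Set Filter

noncomputable section

namespace SDEKernels

/-- Entrywise interval integral of a matrix-valued function. -/
def matInt {ι κ : Type*} (X : ℝ → Matrix ι κ ℝ) (a b : ℝ) : Matrix ι κ ℝ :=
  Matrix.of fun i j => ∫ τ in a..b, X τ i j

/-- Entrywise continuity of a matrix-valued function on a set. -/
def MatContOn {ι κ : Type*} (X : ℝ → Matrix ι κ ℝ) (s : Set ℝ) : Prop :=
  ∀ i j, ContinuousOn (fun t => X t i j) s

/-- Entrywise interval integrability (matrix-valued `L¹` on `[a,b]`). -/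
def MatII {ι κ : Type*} (X : ℝ → Matrix ι κ ℝ) (a b : ℝ) : Prop :=
  ∀ i j, IntervalIntegrable (fun t => X t i j) volume a b

/-- Entrywise square integrability (matrix-valued `L²` on `[a,b]`). -/
def MatL2 {ι κ : Type*} (X : ℝ → Matrix ι κ ℝ) (a b : ℝ) : Prop :=
  ∀ i j, IntervalIntegrable (fun t => X t i j) volume a b ∧
    IntervalIntegrable (fun t => (X t i j) ^ 2) volume a b

/-- Componentwise square integrability (vector-valued `L²` on `[a,b]`). -/
def VecL2 {ι : Type*} (x : ℝ → ι → ℝ) (a b : ℝ) : Prop :=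
  ∀ i, IntervalIntegrable (fun t => x t i) volume a b ∧
    IntervalIntegrable (fun t => (x t i) ^ 2) volume a b

/-- `G(τ) Q(τ) G(τ)*`. -/
def gqg {n d : ℕ} (G : ℝ → Matrix (Fin n) (Fin d) ℝ) (Q : ℝ → Matrix (Fin d) (Fin d) ℝ)
    (τ : ℝ) : Matrix (Fin n) (Fin n) ℝ := G τ * Q τ * (G τ)ᵀ

/-- `H(τ)* R(τ)⁻¹ H(τ)`. -/
def hrh {n m : ℕ} (H : ℝ → Matrix (Fin m) (Fin n) ℝ) (R : ℝ → Matrix (Fin m) (Fin m) ℝ)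
    (τ : ℝ) : Matrix (Fin n) (Fin n) ℝ := (H τ)ᵀ * (R τ)⁻¹ * H τ

/-- `Φ` is the state-transition matrix of `x' = A(s) x` on `[a,b]`, in the
Carathéodory (integral) sense: `Φ(t,t) = I` and `∂ₛ Φ(s,t) = A(s) Φ(s,t)`. -/
def IsTransition {ι : Type*} [Fintype ι] [DecidableEq ι] (a b : ℝ)
    (A : ℝ → Matrix ι ι ℝ) (Φ : ℝ → ℝ → Matrix ι ι ℝ) : Prop :=
  ∀ t ∈ Icc a b,
    MatContOn (fun s => Φ s t) (Icc a b) ∧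
    MatII (fun τ => A τ * Φ τ t) a b ∧
    ∀ s ∈ Icc a b, Φ s t = 1 + matInt (fun τ => A τ * Φ τ t) t s

/-- Carathéodory solution of the backward matrix Riccati equation
`-Σ' = ΣF + F*Σ - Σ G Q G* Σ + H* R⁻¹ H`, `Σ(b) = ST`, on `[a,b]`. -/
def SolvesBackRiccati {n m d : ℕ} (a b : ℝ) (F : ℝ → Matrix (Fin n) (Fin n) ℝ)
    (G : ℝ → Matrix (Fin n) (Fin d) ℝ) (Q : ℝ → Matrix (Fin d) (Fin d) ℝ)
    (H : ℝ → Matrix (Fin m) (Fin n) ℝ) (R : ℝ → Matrix (Fin m) (Fin m) ℝ)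
    (ST : Matrix (Fin n) (Fin n) ℝ) (S : ℝ → Matrix (Fin n) (Fin n) ℝ) : Prop :=
  MatContOn S (Icc a b) ∧
  MatII (fun τ => S τ * F τ + (F τ)ᵀ * S τ - S τ * gqg G Q τ * S τ + hrh H R τ) a b ∧
  S b = ST ∧
  ∀ t ∈ Icc a b,
    S t = ST + matInt (fun τ => S τ * F τ + (F τ)ᵀ * S τ - S τ * gqg G Q τ * S τ + hrh H R τ) t b

/-- Carathéodory solution of the forward matrix Riccati equation
`Π' = FΠ + ΠF* - Π H* R⁻¹ H Π + G Q G*`, `Π(a) = P0`, on `[a,b]`. -/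
def SolvesFwdRiccati {n m d : ℕ} (a b : ℝ) (F : ℝ → Matrix (Fin n) (Fin n) ℝ)
    (G : ℝ → Matrix (Fin n) (Fin d) ℝ) (Q : ℝ → Matrix (Fin d) (Fin d) ℝ)
    (H : ℝ → Matrix (Fin m) (Fin n) ℝ) (R : ℝ → Matrix (Fin m) (Fin m) ℝ)
    (P0 : Matrix (Fin n) (Fin n) ℝ) (P : ℝ → Matrix (Fin n) (Fin n) ℝ) : Prop :=
  MatContOn P (Icc a b) ∧
  MatII (fun τ => F τ * P τ + P τ * (F τ)ᵀ - P τ * hrh H R τ * P τ + gqg G Q τ) a b ∧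
  P a = P0 ∧
  ∀ t ∈ Icc a b,
    P t = P0 + matInt (fun τ => F τ * P τ + P τ * (F τ)ᵀ - P τ * hrh H R τ * P τ + gqg G Q τ) a t

/-- Carathéodory solution of the perturbed two-point boundary value problem
`μ' = Fμ - GQG*ν + lμ`, `-ν' = F*ν + H*R⁻¹Hμ - lν`, `μ(a) = -P0 ν(a)`, `ν(b) = ST μ(b)`. -/
def SolvesTPBVP {n m d : ℕ} (a b : ℝ) (F : ℝ → Matrix (Fin n) (Fin n) ℝ)
    (G : ℝ → Matrix (Fin n) (Fin d) ℝ) (Q : ℝ → Matrix (Fin d) (Fin d) ℝ)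
    (H : ℝ → Matrix (Fin m) (Fin n) ℝ) (R : ℝ → Matrix (Fin m) (Fin m) ℝ)
    (P0 ST : Matrix (Fin n) (Fin n) ℝ) (lμ lν : ℝ → Fin n → ℝ)
    (μ ν : ℝ → Fin n → ℝ) : Prop :=
  ContinuousOn μ (Icc a b) ∧ ContinuousOn ν (Icc a b) ∧
  IntervalIntegrable (fun τ => (F τ).mulVec (μ τ) - (gqg G Q τ).mulVec (ν τ) + lμ τ) volume a b ∧
  IntervalIntegrable (fun τ => (F τ)ᵀ.mulVec (ν τ) + (hrh H R τ).mulVec (μ τ) - lν τ) volume a b ∧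
  (∀ t ∈ Icc a b,
    μ t = μ a + ∫ τ in a..t, ((F τ).mulVec (μ τ) - (gqg G Q τ).mulVec (ν τ) + lμ τ)) ∧
  (∀ t ∈ Icc a b,
    ν t = ν b + ∫ τ in t..b, ((F τ)ᵀ.mulVec (ν τ) + (hrh H R τ).mulVec (μ τ) - lν τ)) ∧
  μ a = -(P0.mulVec (ν a)) ∧
  ν b = ST.mulVec (μ b)

/-- The trajectory kernel `K(s,t|T)`. -/
def Kker {n d : ℕ} (t0 : ℝ) (G : ℝ → Matrix (Fin n) (Fin d) ℝ)
    (Q : ℝ → Matrix (Fin d) (Fin d) ℝ) (PhiFS : ℝ → ℝ → Matrix (Fin n) (Fin n) ℝ)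
    (S : ℝ → Matrix (Fin n) (Fin n) ℝ) (P0h : Matrix (Fin n) (Fin n) ℝ)
    (s t : ℝ) : Matrix (Fin n) (Fin n) ℝ :=
  PhiFS s t0 * P0h * (1 + P0h * S t0 * P0h)⁻¹ * P0h * (PhiFS t t0)ᵀ +
    matInt (fun τ => PhiFS s τ * gqg G Q τ * (PhiFS t τ)ᵀ) t0 (min s t)

/-- The information kernel `Λ(s,t|T)`. -/
def Lker {n m : ℕ} (T : ℝ) (H : ℝ → Matrix (Fin m) (Fin n) ℝ)
    (R : ℝ → Matrix (Fin m) (Fin m) ℝ) (PhiFP : ℝ → ℝ → Matrix (Fin n) (Fin n) ℝ)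
    (P : ℝ → Matrix (Fin n) (Fin n) ℝ) (STh : Matrix (Fin n) (Fin n) ℝ)
    (s t : ℝ) : Matrix (Fin n) (Fin n) ℝ :=
  (PhiFP T s)ᵀ * STh * (1 + STh * P T * STh)⁻¹ * STh * PhiFP T t +
    matInt (fun τ => (PhiFP τ s)ᵀ * hrh H R τ * PhiFP τ t) (max s t) T


/-- Carathéodory solution of the forward linear ODE `x' = A(τ) x` (vector-valued). -/
def SolvesLinFwd {n : ℕ} (a b : ℝ) (A : ℝ → Matrix (Fin n) (Fin n) ℝ)
    (x : ℝ → Fin n → ℝ) : Prop :=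
  ContinuousOn x (Icc a b) ∧
  IntervalIntegrable (fun τ => (A τ).mulVec (x τ)) volume a b ∧
  ∀ t ∈ Icc a b, x t = x a + ∫ τ in a..t, (A τ).mulVec (x τ)

/-- Carathéodory solution of the backward linear ODE `-χ' = F(σ)* χ` on `[a,c]`
with terminal value `χ(c) = z`. -/
def SolvesChi {n : ℕ} (a c : ℝ) (F : ℝ → Matrix (Fin n) (Fin n) ℝ) (z : Fin n → ℝ)
    (χ : ℝ → Fin n → ℝ) : Prop :=
  ContinuousOn χ (Icc a c) ∧
  IntervalIntegrable (fun σ => (F σ)ᵀ.mulVec (χ σ)) volume a c ∧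
  χ c = z ∧
  ∀ τ ∈ Icc a c, χ τ = z + ∫ σ in τ..c, (F σ)ᵀ.mulVec (χ σ)

/-- Carathéodory solution of the impulse-response two-point boundary value problem at `t`:
`x' = Fx - GQG*q + GQG*χ·1_{τ<t}`, `-q' = F*q + H*R⁻¹Hx`,
`x(a) = -P0 q(a) + P0 χ(a)`, `q(b) = ST x(b)`. -/
def SolvesImpulseSystem {n m d : ℕ} (a b t : ℝ) (F : ℝ → Matrix (Fin n) (Fin n) ℝ)
    (G : ℝ → Matrix (Fin n) (Fin d) ℝ) (Q : ℝ → Matrix (Fin d) (Fin d) ℝ)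
    (H : ℝ → Matrix (Fin m) (Fin n) ℝ) (R : ℝ → Matrix (Fin m) (Fin m) ℝ)
    (P0 ST : Matrix (Fin n) (Fin n) ℝ) (χ x q : ℝ → Fin n → ℝ) : Prop :=
  ContinuousOn x (Icc a b) ∧ ContinuousOn q (Icc a b) ∧
  IntervalIntegrable (fun τ => (F τ).mulVec (x τ) - (gqg G Q τ).mulVec (q τ) +
    (if τ < t then (gqg G Q τ).mulVec (χ τ) else 0)) volume a b ∧
  IntervalIntegrable (fun τ => (F τ)ᵀ.mulVec (q τ) + (hrh H R τ).mulVec (x τ)) volume a b ∧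
  (∀ s ∈ Icc a b, x s = x a + ∫ τ in a..s, ((F τ).mulVec (x τ) - (gqg G Q τ).mulVec (q τ) +
    (if τ < t then (gqg G Q τ).mulVec (χ τ) else 0))) ∧
  (∀ s ∈ Icc a b, q s = q b + ∫ τ in s..b, ((F τ)ᵀ.mulVec (q τ) + (hrh H R τ).mulVec (x τ))) ∧
  x a = -(P0.mulVec (q a)) + P0.mulVec (χ a) ∧
  q b = ST.mulVec (x b)

/-- Right-hand side of the adjoint equation `-λ' = F*λ + H*R⁻¹H γ`. -/
def hamRHS {n m : ℕ} (F : ℝ → Matrix (Fin n) (Fin n) ℝ)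
    (H : ℝ → Matrix (Fin m) (Fin n) ℝ) (R : ℝ → Matrix (Fin m) (Fin m) ℝ)
    (gam lam : ℝ → Fin n → ℝ) (τ : ℝ) : Fin n → ℝ :=
  (F τ)ᵀ.mulVec (lam τ) + (hrh H R τ).mulVec (gam τ)

/-- Carathéodory solution `(γ, λ)` of the Hamiltonian system with a jump of size `lamb` at `s`
(and terminal condition appropriate to `ΣT = 0`):
`γ' = Fγ - GQG*λ`, `-λ' = F*λ + H*R⁻¹Hγ` on `[t0,s)` and `(s,T]`, `γ(t0) = -Π0 λ(t0)`,
`λ(T) = 0` if `s < T` (`λ(T) = lamb` if `s = T`), and `λ(s) - λ(s⁺) = lamb` if `s < T`. -/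
def SolvesHamJump {n m d : ℕ} (t0 T s : ℝ) (F : ℝ → Matrix (Fin n) (Fin n) ℝ)
    (G : ℝ → Matrix (Fin n) (Fin d) ℝ) (Q : ℝ → Matrix (Fin d) (Fin d) ℝ)
    (H : ℝ → Matrix (Fin m) (Fin n) ℝ) (R : ℝ → Matrix (Fin m) (Fin m) ℝ)
    (P0 : Matrix (Fin n) (Fin n) ℝ) (lamb : Fin n → ℝ) (gam lam : ℝ → Fin n → ℝ) : Prop :=
  ContinuousOn gam (Icc t0 T) ∧
  IntervalIntegrable (fun τ => (F τ).mulVec (gam τ) - (gqg G Q τ).mulVec (lam τ)) volume t0 T ∧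
  IntervalIntegrable (hamRHS F H R gam lam) volume t0 T ∧
  gam t0 = -(P0.mulVec (lam t0)) ∧
  (∀ t ∈ Icc t0 T,
    gam t = gam t0 + ∫ τ in t0..t, ((F τ).mulVec (gam τ) - (gqg G Q τ).mulVec (lam τ))) ∧
  ContinuousOn lam (Icc t0 s) ∧
  (∀ t ∈ Icc t0 s, lam t = lam s + ∫ τ in t..s, hamRHS F H R gam lam τ) ∧
  (s < T →
    ContinuousOn lam (Ioc s T) ∧ lam T = 0 ∧
    (∀ t ∈ Ioc s T, lam t = ∫ τ in t..T, hamRHS F H R gam lam τ) ∧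
    Tendsto lam (nhdsWithin s (Ioi s)) (nhds (lam s - lamb))) ∧
  (s = T → lam T = lamb)

/-- Carathéodory solution of the filter equation
`r' = (F - Π H* R⁻¹ H) r + Π H* R⁻¹ g`, `r(t0) = 0`. -/
def SolvesRODE {n m : ℕ} (a b : ℝ) (F : ℝ → Matrix (Fin n) (Fin n) ℝ)
    (H : ℝ → Matrix (Fin m) (Fin n) ℝ) (R : ℝ → Matrix (Fin m) (Fin m) ℝ)
    (P : ℝ → Matrix (Fin n) (Fin n) ℝ) (g : ℝ → Fin m → ℝ) (rr : ℝ → Fin n → ℝ) : Prop :=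
  ContinuousOn rr (Icc a b) ∧
  IntervalIntegrable (fun τ => (F τ - P τ * hrh H R τ).mulVec (rr τ) +
    (P τ * (H τ)ᵀ * (R τ)⁻¹).mulVec (g τ)) volume a b ∧
  rr a = 0 ∧
  ∀ t ∈ Icc a b, rr t = ∫ τ in a..t, ((F τ - P τ * hrh H R τ).mulVec (rr τ) +
    (P τ * (H τ)ᵀ * (R τ)⁻¹).mulVec (g τ))

/-- Carathéodory solution of the controlled ODE `x' = F x + G Q^{1/2} u`, `x(t0) = Π0^{1/2} ξ`. -/
def SolvesControlODE {n d : ℕ} (a b : ℝ) (F : ℝ → Matrix (Fin n) (Fin n) ℝ)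
    (G : ℝ → Matrix (Fin n) (Fin d) ℝ) (Qh : ℝ → Matrix (Fin d) (Fin d) ℝ)
    (P0h : Matrix (Fin n) (Fin n) ℝ) (ξ : Fin n → ℝ) (u : ℝ → Fin d → ℝ)
    (x : ℝ → Fin n → ℝ) : Prop :=
  ContinuousOn x (Icc a b) ∧
  IntervalIntegrable (fun σ => (F σ).mulVec (x σ) + (G σ * Qh σ).mulVec (u σ)) volume a b ∧
  x a = P0h.mulVec ξ ∧
  ∀ τ ∈ Icc a b, x τ = x a + ∫ σ in a..τ, ((F σ).mulVec (x σ) + (G σ * Qh σ).mulVec (u σ))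

/-- The least-squares objective of the deterministic smoothing problem. -/
def Jfun {n m d : ℕ} (a b : ℝ) (H : ℝ → Matrix (Fin m) (Fin n) ℝ)
    (R : ℝ → Matrix (Fin m) (Fin m) ℝ) (ST : Matrix (Fin n) (Fin n) ℝ)
    (ytil : ℝ → Fin m → ℝ) (ξ : Fin n → ℝ) (u : ℝ → Fin d → ℝ) (x : ℝ → Fin n → ℝ) : ℝ :=
  dotProduct ξ ξ + dotProduct (ST.mulVec (x b)) (x b)
    + (∫ τ in a..b, dotProduct (u τ) (u τ))
    + (∫ τ in a..b, dotProduct ((hrh H R τ).mulVec (x τ)) (x τ))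
    - 2 * ∫ τ in a..b, dotProduct (ytil τ) (((R τ)⁻¹ * H τ).mulVec (x τ))
/-- The Hamiltonian matrix `[[F, -GQG*], [-H*R⁻¹H, -F*]]`. -/
def hamMat {n m d : ℕ} (F : ℝ → Matrix (Fin n) (Fin n) ℝ)
    (G : ℝ → Matrix (Fin n) (Fin d) ℝ) (Q : ℝ → Matrix (Fin d) (Fin d) ℝ)
    (H : ℝ → Matrix (Fin m) (Fin n) ℝ) (R : ℝ → Matrix (Fin m) (Fin m) ℝ) (t : ℝ) :
    Matrix (Fin n ⊕ Fin n) (Fin n ⊕ Fin n) ℝ :=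
  Matrix.fromBlocks (F t) (-(gqg G Q t)) (-(hrh H R t)) (-(F t)ᵀ)

/-- `Φ̄(T,t) = [[I,0],[-ΣT,I]] · Φ_𝐇(T,t)`. -/
def phiBar {n : ℕ} (ST : Matrix (Fin n) (Fin n) ℝ)
    (PhiH : ℝ → ℝ → Matrix (Fin n ⊕ Fin n) (Fin n ⊕ Fin n) ℝ) (T t : ℝ) :
    Matrix (Fin n ⊕ Fin n) (Fin n ⊕ Fin n) ℝ :=
  Matrix.fromBlocks 1 0 (-ST) 1 * PhiH T t

/-- `f'` is integrable on `[a,b]` and `f` is absolutely continuous on `[a,b]` with a.e. derivative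
`f'`, expressed as `f t = f a + ∫ₐᵗ f'`. -/
def IsPrimitiveOn (f f' : ℝ → ℝ) (a b : ℝ) : Prop :=
  IntervalIntegrable f' volume a b ∧ ∀ t ∈ Icc a b, f t = f a + ∫ τ in a..t, f' τ

theorem IntervalIntegrable.mono_right {f : ℝ → ℝ} {a b t : ℝ}
    (hf : IntervalIntegrable f volume a b) (ht : t ∈ Icc a b) :
    IntervalIntegrable f volume a t :=
  hf.mono_set (by
    rw [uIcc_of_le ht.1, uIcc_of_le (ht.1.trans ht.2)]
    exact Icc_subset_Icc_right ht.2)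

theorem IsPrimitiveOn.add {f f' g g' : ℝ → ℝ} {a b : ℝ}
    (hf : IsPrimitiveOn f f' a b) (hg : IsPrimitiveOn g g' a b) :
    IsPrimitiveOn (fun t => f t + g t) (fun t => f' t + g' t) a b := by
  refine ⟨hf.1.add hg.1, fun t ht => ?_⟩
  beta_reduce
  rw [intervalIntegral.integral_add (IntervalIntegrable.mono_right hf.1 ht)
    (IntervalIntegrable.mono_right hg.1 ht), hf.2 t ht, hg.2 t ht]
  ring

theorem IsPrimitiveOn.sum {ι : Type*} {f f' : ι → ℝ → ℝ} {a b : ℝ} (s : Finset ι)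
    (h : ∀ i ∈ s, IsPrimitiveOn (f i) (f' i) a b) :
    IsPrimitiveOn (fun t => ∑ i ∈ s, f i t) (fun t => ∑ i ∈ s, f' i t) a b := by
  classical
  induction s using Finset.induction_on with
  | empty => exact ⟨by simp, by simp⟩
  | insert i s hi ih =>
    simp only [Finset.sum_insert hi]
    exact (h i (Finset.mem_insert_self i s)).add
      (ih fun j hj => h j (Finset.mem_insert_of_mem hj))

/-- Changing the base point of the integral from the right end `b` to the left end `a`. -/
theorem IsPrimitiveOn.of_backward {f f' : ℝ → ℝ} {a b : ℝ} (hab : a ≤ b)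
    (hf' : IntervalIntegrable f' volume a b)
    (h : ∀ t ∈ Icc a b, f t = f b + ∫ τ in t..b, f' τ) :
    IsPrimitiveOn f (fun t => -f' t) a b := by
  refine ⟨hf'.neg, fun t ht => ?_⟩
  have h1 : IntervalIntegrable f' volume a t := IntervalIntegrable.mono_right hf' ht
  rw [h t ht, h a (left_mem_Icc.2 hab), intervalIntegral.integral_neg,
    ← intervalIntegral.integral_add_adjacent_intervals h1 (h1.symm.trans hf')]
  ring

/-- The product rule for absolutely continuous functions. -/
theorem IsPrimitiveOn.mul {f f' g g' : ℝ → ℝ} {a b : ℝ}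
    (hab : a ≤ b) (hf : IsPrimitiveOn f f' a b) (hg : IsPrimitiveOn g g' a b) :
    IsPrimitiveOn (fun t => f t * g t) (fun t => f' t * g t + f t * g' t) a b := by
  -- The hypotheses say nothing about `f` and `g` outside `[a,b]`, so the derivatives are taken of
  -- the primitives `U` and `V`, which agree with `f` and `g` on `[a,b]`.
  set U : ℝ → ℝ := fun x => f a + ∫ τ in a..x, f' τ with hU
  set V : ℝ → ℝ := fun x => g a + ∫ τ in a..x, g' τ with hV
  have acP : ∀ {h : ℝ → ℝ} (c : ℝ), IntervalIntegrable h volume a b →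
      AbsolutelyContinuousOnInterval (fun x => c + ∫ τ in a..x, h τ) a b := fun {h} c hh =>
    (contDiff_const (c := c)).contDiffOn.absolutelyContinuousOnInterval.add
      (hh.absolutelyContinuousOnInterval_intervalIntegral left_mem_uIcc)
  have acU : AbsolutelyContinuousOnInterval U a b := acP (f a) hf.1
  have acV : AbsolutelyContinuousOnInterval V a b := acP (g a) hg.1
  have eqU : ∀ x ∈ uIcc a b, f x = U x := fun x hx => hf.2 x (uIcc_of_le hab ▸ hx)
  have eqV : ∀ x ∈ uIcc a b, g x = V x := fun x hx => hg.2 x (uIcc_of_le hab ▸ hx)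
  have fc : ContinuousOn f (uIcc a b) := acU.continuousOn.congr eqU
  have gc : ContinuousOn g (uIcc a b) := acV.continuousOn.congr eqV
  refine ⟨(hf.1.mul_continuousOn gc).add (hg.1.continuousOn_mul fc), fun t ht => ?_⟩
  have hsub : uIcc a t ⊆ uIcc a b := by
    rw [uIcc_of_le ht.1, uIcc_of_le hab]
    exact Icc_subset_Icc_right ht.2
  have key := (acU.mono hsub).integral_deriv_mul_eq_sub (acV.mono hsub)
  have hcongr : ∫ x in a..t, deriv U x * V x + U x * deriv V x =
      ∫ x in a..t, f' x * g x + f x * g' x := by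
    apply intervalIntegral.integral_congr_ae
    filter_upwards [hf.1.ae_hasDerivAt_integral, hg.1.ae_hasDerivAt_integral] with x h1 h2 hx
    have hx' : x ∈ uIcc a b := hsub (uIoc_subset_uIcc hx)
    have d1 : deriv U x = f' x := ((h1 hx' a left_mem_uIcc).const_add (f a)).deriv
    have d2 : deriv V x = g' x := ((h2 hx' a left_mem_uIcc).const_add (g a)).deriv
    rw [d1, d2, eqU x hx', eqV x hx']
  have htu : t ∈ uIcc a b := by rwa [uIcc_of_le hab]
  rw [hcongr, ← eqU t htu, ← eqV t htu, ← eqU a left_mem_uIcc, ← eqV a left_mem_uIcc] at key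
  rw [key]
  ring

/-- Substituting both equations into `μ' + Π'ν + Πν'` gives the filter equation's right-hand
side. -/
theorem rhs_identity {n : ℕ} (F P A B : Matrix (Fin n) (Fin n) ℝ) (μ ν l k : Fin n → ℝ) :
    (F *ᵥ μ - B *ᵥ ν + l) +
      ((F * P + P * Fᵀ - P * A * P + B) *ᵥ ν + P *ᵥ (-(Fᵀ *ᵥ ν + A *ᵥ μ - k))) =
    (F - P * A) *ᵥ (μ + P *ᵥ ν) + P *ᵥ k + l := by
  simp only [add_mulVec, sub_mulVec, mulVec_add, mulVec_sub, mulVec_neg, ← mulVec_mulVec]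
  abel

/-- An interval integrable function into a finite product is interval integrable in each
coordinate. -/
theorem intervalIntegrable_apply {n : ℕ} {f : ℝ → Fin n → ℝ} {a b : ℝ}
    (hf : IntervalIntegrable f volume a b) (i : Fin n) :
    IntervalIntegrable (fun t => f t i) volume a b :=
  ⟨hf.1.eval i, hf.2.eval i⟩

theorem intervalIntegrable_of_apply {n : ℕ} {f : ℝ → Fin n → ℝ} {a b : ℝ}
    (hf : ∀ i, IntervalIntegrable (fun t => f t i) volume a b) :
    IntervalIntegrable f volume a b :=
  ⟨Integrable.of_eval fun i => (hf i).1, Integrable.of_eval fun i => (hf i).2⟩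

theorem intervalIntegral_apply {n : ℕ} {f : ℝ → Fin n → ℝ} {a b : ℝ}
    (hf : IntervalIntegrable f volume a b) (i : Fin n) :
    (∫ τ in a..b, f τ) i = ∫ τ in a..b, f τ i := by
  rw [intervalIntegral, intervalIntegral, Pi.sub_apply, eval_integral fun i => hf.1.eval i,
    eval_integral fun i => hf.2.eval i]

/-- `r := μ̂ + Π ν̂` solves the forward linear ODE
`r' = (F - ΠH*R⁻¹H)r + Π lν + lμ`, `r(t0) = 0`. -/
theorem stmt4 {n m d : ℕ} (t0 T r : ℝ) (ht : t0 < T) (hr : 0 < r)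
    (F : ℝ → Matrix (Fin n) (Fin n) ℝ) (G : ℝ → Matrix (Fin n) (Fin d) ℝ)
    (Q : ℝ → Matrix (Fin d) (Fin d) ℝ) (H : ℝ → Matrix (Fin m) (Fin n) ℝ)
    (R : ℝ → Matrix (Fin m) (Fin m) ℝ)
    (hF : MatII F t0 T) (hG : MatL2 G t0 T) (hQ : MatII Q t0 T)
    (hQpsd : ∀ t ∈ Icc t0 T, (Q t).PosSemidef) (hH : MatL2 H t0 T) (hR : MatL2 R t0 T)
    (hRbd : ∀ t ∈ Icc t0 T, (R t - r • (1 : Matrix (Fin m) (Fin m) ℝ)).PosSemidef)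
    (P0 ST : Matrix (Fin n) (Fin n) ℝ) (hP0 : P0.PosSemidef) (hST : ST.PosSemidef)
    (Pm : ℝ → Matrix (Fin n) (Fin n) ℝ) (hPm : SolvesFwdRiccati t0 T F G Q H R P0 Pm)
    (lμ lν : ℝ → Fin n → ℝ) (hlμ : VecL2 lμ t0 T) (hlν : VecL2 lν t0 T)
    (μ ν : ℝ → Fin n → ℝ) (hμν : SolvesTPBVP t0 T F G Q H R P0 ST lμ lν μ ν) :
    μ t0 + (Pm t0).mulVec (ν t0) = 0 ∧
    IntervalIntegrable (fun τ => (F τ - Pm τ * hrh H R τ).mulVec (μ τ + (Pm τ).mulVec (ν τ)) +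
      (Pm τ).mulVec (lν τ) + lμ τ) volume t0 T ∧
    ∀ t ∈ Icc t0 T,
      μ t + (Pm t).mulVec (ν t) =
        ∫ τ in t0..t, ((F τ - Pm τ * hrh H R τ).mulVec (μ τ + (Pm τ).mulVec (ν τ)) +
          (Pm τ).mulVec (lν τ) + lμ τ) := by
  obtain ⟨-, hP', hPa, hPt⟩ := hPm
  obtain ⟨-, -, hμ', hν', hμt, hνt, hμa, -⟩ := hμν
  have h0 : μ t0 + (Pm t0).mulVec (ν t0) = 0 := by rw [hμa, hPa, neg_add_cancel]
  have icc : ∀ t ∈ Icc t0 T, uIcc t0 t ⊆ uIcc t0 T ∧ uIcc t T ⊆ uIcc t0 T := fun t h => by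
    rw [uIcc_of_le h.1, uIcc_of_le ht.le, uIcc_of_le h.2]
    exact ⟨Icc_subset_Icc_right h.2, Icc_subset_Icc_left h.1⟩
  have pμ : ∀ i, IsPrimitiveOn (fun t => μ t i) _ t0 T := fun i =>
    ⟨intervalIntegrable_apply hμ' i, fun t h => by
      have := congrFun (hμt t h) i
      rwa [Pi.add_apply, intervalIntegral_apply (hμ'.mono_set (icc t h).1)] at this⟩
  have pν : ∀ i, IsPrimitiveOn (fun t => ν t i) _ t0 T := fun i =>
    IsPrimitiveOn.of_backward ht.le (intervalIntegrable_apply hν' i) fun t h => by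
      have := congrFun (hνt t h) i
      rwa [Pi.add_apply, intervalIntegral_apply (hν'.mono_set (icc t h).2)] at this
  have pP : ∀ i j, IsPrimitiveOn (fun t => Pm t i j) _ t0 T := fun i j =>
    ⟨hP' i j, fun t h => by
      have := congrFun (congrFun (hPt t h) i) j
      rwa [← hPa] at this⟩
  have main : ∀ i, IsPrimitiveOn (fun t => (μ t + (Pm t).mulVec (ν t)) i)
      (fun τ => ((F τ - Pm τ * hrh H R τ).mulVec (μ τ + (Pm τ).mulVec (ν τ)) +
        (Pm τ).mulVec (lν τ) + lμ τ) i) t0 T := fun i => by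
    have h := (pμ i).add (IsPrimitiveOn.sum Finset.univ fun j _ => (pP i j).mul ht.le (pν j))
    convert h using 1
    · rfl
    · funext τ
      rw [← rhs_identity (B := gqg G Q τ), Pi.add_apply, Pi.add_apply, Finset.sum_add_distrib]
      rfl
  have hint := intervalIntegrable_of_apply fun i => (main i).1
  refine ⟨h0, hint, fun t h => funext fun i => ?_⟩
  have hi := (main i).2 t h
  beta_reduce at hi
  rw [h0, Pi.zero_apply, zero_add] at hi
  rw [intervalIntegral_apply (hint.mono_set (icc t h).1), hi]

end SDEKernels
end
end

section
/- Assume ΣT = 0. Fix s ∈ [t0,T] and λ̄ ∈ ℝⁿ, and let (γ̂_s, λ̂_s) solve the Hamiltonian system with a jump: γ̂_s' = Fγ̂_s - GQG*λ̂_s and -λ̂_s' = F*λ̂_s + H*R^{-1}Hγ̂_s on [t0,s) and on (s,T], with γ̂_s continuous on [t0,T], γ̂_s(t0) = -Π0 λ̂_s(t0), λ̂_s(T) = 0 if s < T (λ̂_s(T) = λ̄ if s = T), and jump condition λ̂_s(s) - λ̂_s(s⁺) = λ̄ when s < T. Let g ∈ L²([t0,T],ℝᵐ) and let (μ̂, ν̂)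 solve the two-point boundary value problem μ̂' = Fμ̂ - GQG*ν̂, -ν̂' = F*ν̂ + H*R^{-1}Hμ̂ - H*R^{-1}g, μ̂(t0) = -Π0 ν̂(t0), ν̂(T) = 0. Then ⟨λ̄, μ̂(s)⟩ = -∫_{t0}^T ⟨γ̂_s(t), H*(t)R(t)^{-1}g(t)⟩ dt. -/
/-!
The quantity `D = ⟨γ, ν⟩ - ⟨λ, μ⟩` is a bilinear concomitant of the two Hamiltonian systems: since
`GQG*` and `H*R⁻¹H` are symmetric, all homogeneous terms cancel in the product rule and
`D' = ⟨γ, H*R⁻¹g⟩` almost everywhere. The boundary conditions give `D(t0) = 0` (symmetry of `Π0`)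
and, when `s < T`, `D(T) = 0`. Integrating over `[t0, s]` and `[s, T]` separately, the total integral
of `⟨γ, H*R⁻¹g⟩` is the difference of the two one-sided values of `D` at `s`; only `λ` jumps
there, so this is `-⟨λ(s) - λ(s⁺), μ(s)⟩ = -⟨λ̄, μ(s)⟩`. When `s = T` the same value is `D(T)`.

The analytic ingredient is integration by parts for primitives of integrable functions
(`IsPrim.dotProduct_sub`), which rests on the Lebesgue differentiation theorem and the calculus of
absolutely continuous functions. Integrability of the right-hand sides is part of the notion of
solution, so it need not be derived from the coefficients.
-/

open MeasureTheory Matrix Set Filter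

noncomputable section

namespace SDEKernels

/-- `x` is on `[a,b]` a primitive of the integrable function `f`, i.e. an absolutely continuous
solution of `x' = f`. Both endpoints of the integral range over `[a,b]`, so that initial and
terminal value problems are treated alike. -/
def IsPrim {E : Type*} [NormedAddCommGroup E] [NormedSpace ℝ E] (f x : ℝ → E) (a b : ℝ) : Prop :=
  IntervalIntegrable f volume a b ∧
    ∀ c ∈ Icc a b, ∀ t ∈ Icc a b, x t - x c = ∫ τ in c..t, f τ

lemma intervalIntegrable_of_mem_Icc {E : Type*} [NormedAddCommGroup E] {f : ℝ → E} {a b c t : ℝ}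
    (hf : IntervalIntegrable f volume a b) (hc : c ∈ Icc a b) (ht : t ∈ Icc a b) :
    IntervalIntegrable f volume c t :=
  hf.mono_set ((uIcc_subset_Icc hc ht).trans Icc_subset_uIcc)

lemma IsPrim.of_left {E : Type*} [NormedAddCommGroup E] [NormedSpace ℝ E]
    {f x : ℝ → E} {a b : ℝ} (hab : a ≤ b)
    (hf : IntervalIntegrable f volume a b)
    (hx : ∀ t ∈ Icc a b, x t = x a + ∫ τ in a..t, f τ) : IsPrim f x a b := by
  refine ⟨hf, fun c hc t ht => ?_⟩
  have ha : a ∈ Icc a b := left_mem_Icc.2 hab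
  rw [hx t ht, hx c hc, add_sub_add_left_eq_sub,
    intervalIntegral.integral_interval_sub_left (intervalIntegrable_of_mem_Icc hf ha ht)
      (intervalIntegrable_of_mem_Icc hf ha hc)]

lemma IsPrim.of_right {E : Type*} [NormedAddCommGroup E] [NormedSpace ℝ E]
    {f x : ℝ → E} {a b : ℝ} (hab : a ≤ b)
    (hf : IntervalIntegrable f volume a b)
    (hx : ∀ t ∈ Icc a b, x t = x b + ∫ τ in t..b, f τ) : IsPrim (fun τ => -f τ) x a b := by
  refine ⟨hf.neg, fun c hc t ht => ?_⟩
  have hb : b ∈ Icc a b := right_mem_Icc.2 hab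
  rw [hx t ht, hx c hc, add_sub_add_left_eq_sub, intervalIntegral.integral_neg,
    ← intervalIntegral.integral_add_adjacent_intervals (intervalIntegrable_of_mem_Icc hf hc ht)
      (intervalIntegrable_of_mem_Icc hf ht hb)]
  abel

lemma IsPrim.mono {E : Type*} [NormedAddCommGroup E] [NormedSpace ℝ E]
    {f x : ℝ → E} {a b a' b' : ℝ} (h : IsPrim f x a b) (ha : a' ∈ Icc a b)
    (hb : b' ∈ Icc a b) : IsPrim f x a' b' :=
  ⟨intervalIntegrable_of_mem_Icc h.1 ha hb, fun c hc t ht =>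
    h.2 c (Icc_subset_Icc ha.1 hb.2 hc) t (Icc_subset_Icc ha.1 hb.2 ht)⟩

lemma IsPrim.apply {n : ℕ} {f x : ℝ → Fin n → ℝ} {a b : ℝ} (h : IsPrim f x a b) (i : Fin n) :
    IsPrim (fun t => f t i) (fun t => x t i) a b := by
  let L : (Fin n → ℝ) →L[ℝ] ℝ := ContinuousLinearMap.proj i
  refine ⟨⟨L.integrable_comp h.1.1, L.integrable_comp h.1.2⟩, fun c hc t ht => ?_⟩
  have h1 := L.intervalIntegral_comp_comm (intervalIntegrable_of_mem_Icc h.1 hc ht)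
  rw [← h.2 c hc t ht] at h1
  exact h1.symm

/-- Integration by parts for two scalar primitives. -/
lemma IsPrim.mul_sub {p q u v : ℝ → ℝ} {a b : ℝ} (hab : a ≤ b)
    (hu : IsPrim p u a b) (hv : IsPrim q v a b) :
    IntervalIntegrable (fun t => p t * v t + u t * q t) volume a b ∧
    ∫ t in a..b, (p t * v t + u t * q t) = u b * v b - u a * v a := by
  have ha : a ∈ Icc a b := left_mem_Icc.2 hab
  have ha' : a ∈ uIcc a b := left_mem_uIcc
  -- `u` and `v` are only controlled on `[a,b]`; `U` and `V` extend them as honest primitives.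
  set U : ℝ → ℝ := fun t => u a + ∫ τ in a..t, p τ with hU
  set V : ℝ → ℝ := fun t => v a + ∫ τ in a..t, q τ with hV
  have eU : ∀ t ∈ Icc a b, U t = u t := fun t ht => by simp [hU, ← hu.2 a ha t ht]
  have eV : ∀ t ∈ Icc a b, V t = v t := fun t ht => by simp [hV, ← hv.2 a ha t ht]
  have acc : ∀ k : ℝ, AbsolutelyContinuousOnInterval (fun _ : ℝ => k) a b := fun k =>
    (LipschitzWith.const k).lipschitzOnWith.absolutelyContinuousOnInterval
  have acU : AbsolutelyContinuousOnInterval U a b :=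
    (acc _).fun_add (hu.1.absolutelyContinuousOnInterval_intervalIntegral ha')
  have acV : AbsolutelyContinuousOnInterval V a b :=
    (acc _).fun_add (hv.1.absolutelyContinuousOnInterval_intervalIntegral ha')
  have key := acU.integral_deriv_mul_eq_sub acV
  rw [eU a ha, eV a ha, eU b (right_mem_Icc.2 hab), eV b (right_mem_Icc.2 hab)] at key
  have cong : ∀ᵐ t, t ∈ uIoc a b →
      deriv U t * V t + U t * deriv V t = p t * v t + u t * q t := by
    filter_upwards [hu.1.ae_hasDerivAt_integral, hv.1.ae_hasDerivAt_integral] with t h1 h2 h3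
    have h4 := uIoc_subset_uIcc h3
    have h5 : t ∈ Icc a b := by rwa [uIcc_of_le hab] at h4
    rw [((h1 h4 a ha').const_add (u a)).deriv, ((h2 h4 a ha').const_add (v a)).deriv,
      eU t h5, eV t h5]
  have int := (acU.intervalIntegrable_deriv.mul_continuousOn acV.continuousOn).add
      (acV.intervalIntegrable_deriv.continuousOn_mul acU.continuousOn)
  refine ⟨int.congr_ae ?_, ?_⟩
  · exact (ae_restrict_iff' measurableSet_uIoc).2 cong
  · rw [← key]
    exact (intervalIntegral.integral_congr_ae cong).symm

/-- Integration by parts for the Euclidean pairing of two vector-valued primitives. -/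
lemma IsPrim.dotProduct_sub {n : ℕ} {p q u v : ℝ → Fin n → ℝ} {a b : ℝ} (hab : a ≤ b)
    (hu : IsPrim p u a b) (hv : IsPrim q v a b) :
    IntervalIntegrable (fun t => p t ⬝ᵥ v t + u t ⬝ᵥ q t) volume a b ∧
    ∫ t in a..b, (p t ⬝ᵥ v t + u t ⬝ᵥ q t) = u b ⬝ᵥ v b - u a ⬝ᵥ v a := by
  have h := fun i => IsPrim.mul_sub hab (hu.apply i) (hv.apply i)
  simp only [dotProduct, ← Finset.sum_add_distrib, ← Finset.sum_sub_distrib]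
  refine ⟨?_, ?_⟩
  · simpa only [Finset.sum_fn] using
      IntervalIntegrable.sum Finset.univ fun i _ => (h i).1
  · rw [intervalIntegral.integral_finsetSum fun i _ => (h i).1]
    exact Finset.sum_congr rfl fun i _ => (h i).2

lemma transpose_eq_of_posSemidef {k : ℕ} {M : Matrix (Fin k) (Fin k) ℝ} (h : M.PosSemidef) :
    Mᵀ = M := by
  simpa [Matrix.IsHermitian, conjTranspose_eq_transpose_of_trivial] using h.1

/-- The derivative of `⟨x, v⟩ - ⟨y, u⟩` along the two Hamiltonian systems is the forcing term:
the homogeneous terms cancel because `A` and `B` are symmetric. -/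
lemma pairing_deriv {n : ℕ} {F A B : Matrix (Fin n) (Fin n) ℝ} (hA : Aᵀ = A) (hB : Bᵀ = B)
    (x y u v l : Fin n → ℝ) :
    ((F *ᵥ x - A *ᵥ y) ⬝ᵥ v + x ⬝ᵥ -(Fᵀ *ᵥ v + B *ᵥ u - l)) -
      (-(Fᵀ *ᵥ y + B *ᵥ x) ⬝ᵥ u + y ⬝ᵥ (F *ᵥ u - A *ᵥ v + 0)) = x ⬝ᵥ l := by
  have tr : ∀ (M : Matrix (Fin n) (Fin n) ℝ) (w z : Fin n → ℝ),
      w ⬝ᵥ (M *ᵥ z) = (Mᵀ *ᵥ w) ⬝ᵥ z := fun M w z => by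
    rw [dotProduct_mulVec, mulVec_transpose]
  simp only [add_zero, neg_dotProduct, dotProduct_neg, add_dotProduct, sub_dotProduct,
    dotProduct_add, dotProduct_sub, tr, hA, hB, transpose_transpose]
  ring

/-- Integrated form of the pairing identity on an interval without jump. -/
lemma pairing_integral {n : ℕ} {a b : ℝ} (hab : a ≤ b) {x' y' u' v' x y u v l : ℝ → Fin n → ℝ}
    (hx : IsPrim x' x a b) (hy : IsPrim y' y a b) (hu : IsPrim u' u a b) (hv : IsPrim v' v a b)
    (h : ∀ t ∈ Ioc a b,
      (x' t ⬝ᵥ v t + x t ⬝ᵥ v' t) - (y' t ⬝ᵥ u t + y t ⬝ᵥ u' t) = x t ⬝ᵥ l t) :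
    IntervalIntegrable (fun t => x t ⬝ᵥ l t) volume a b ∧
    ∫ t in a..b, x t ⬝ᵥ l t = (x b ⬝ᵥ v b - y b ⬝ᵥ u b) - (x a ⬝ᵥ v a - y a ⬝ᵥ u a) := by
  obtain ⟨i1, e1⟩ := IsPrim.dotProduct_sub hab hx hv
  obtain ⟨i2, e2⟩ := IsPrim.dotProduct_sub hab hy hu
  rw [← uIoc_of_le hab] at h
  refine ⟨(i1.sub i2).congr h, ?_⟩
  rw [← intervalIntegral.integral_congr_ae (ae_of_all _ h),
    intervalIntegral.integral_sub i1 i2, e1, e2]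
  ring


/-- Pairing the Hamiltonian system with a jump at `s` against the two-point boundary
value problem driven by `lν = H*R⁻¹g` (and `ΣT = 0`):
`⟨λ̄, μ̂(s)⟩ = -∫ ⟨γ̂ₛ(t), H*(t)R(t)⁻¹g(t)⟩ dt`. -/
theorem stmt9 {n m d : ℕ} (t0 T r : ℝ) (ht : t0 < T) (hr : 0 < r)
    (F : ℝ → Matrix (Fin n) (Fin n) ℝ) (G : ℝ → Matrix (Fin n) (Fin d) ℝ)
    (Q : ℝ → Matrix (Fin d) (Fin d) ℝ) (H : ℝ → Matrix (Fin m) (Fin n) ℝ)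
    (R : ℝ → Matrix (Fin m) (Fin m) ℝ)
    (hF : MatII F t0 T) (hG : MatL2 G t0 T) (hQ : MatII Q t0 T)
    (hQpsd : ∀ t ∈ Icc t0 T, (Q t).PosSemidef) (hH : MatL2 H t0 T) (hR : MatL2 R t0 T)
    (hRbd : ∀ t ∈ Icc t0 T, (R t - r • (1 : Matrix (Fin m) (Fin m) ℝ)).PosSemidef)
    (P0 : Matrix (Fin n) (Fin n) ℝ) (hP0 : P0.PosSemidef)
    (s : ℝ) (hs : s ∈ Icc t0 T) (lamb : Fin n → ℝ)
    (gam lam : ℝ → Fin n → ℝ) (hHam : SolvesHamJump t0 T s F G Q H R P0 lamb gam lam)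
    (g : ℝ → Fin m → ℝ) (hg : VecL2 g t0 T)
    (μ ν : ℝ → Fin n → ℝ)
    (hμν : SolvesTPBVP t0 T F G Q H R P0 0 (fun _ => 0)
      (fun t => ((H t)ᵀ * (R t)⁻¹).mulVec (g t)) μ ν) :
    dotProduct lamb (μ s) =
      -∫ t in t0..T, dotProduct (gam t) (((H t)ᵀ * (R t)⁻¹).mulVec (g t)) := by
  obtain ⟨-, iγ, ilam, γ0, eγ, -, elam, hlt, heq⟩ := hHam
  obtain ⟨-, -, iμ, iν, eμ, eν, μ0, νT⟩ := hμν
  have m0 : t0 ∈ Icc t0 T := left_mem_Icc.2 ht.le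
  have mT : T ∈ Icc t0 T := right_mem_Icc.2 ht.le
  have pγ := IsPrim.of_left ht.le iγ eγ
  have pμ := IsPrim.of_left ht.le iμ eμ
  have pν := IsPrim.of_right ht.le iν eν
  have plam := IsPrim.of_right hs.1 (intervalIntegrable_of_mem_Icc ilam m0 hs) elam
  have symA : ∀ t ∈ Icc t0 T, (gqg G Q t)ᵀ = gqg G Q t := fun t h => by
    simp [gqg, transpose_mul, transpose_eq_of_posSemidef (hQpsd t h), Matrix.mul_assoc]
  have symB : ∀ t ∈ Icc t0 T, (hrh H R t)ᵀ = hrh H R t := fun t h => by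
    have hRt : (R t)ᵀ = R t := by
      simpa using transpose_eq_of_posSemidef (hRbd t h)
    simp [hrh, transpose_mul, transpose_nonsing_inv, hRt, Matrix.mul_assoc]
  obtain ⟨i1, e1⟩ := pairing_integral (l := fun t => ((H t)ᵀ * (R t)⁻¹) *ᵥ g t) hs.1
    (pγ.mono m0 hs) plam (pμ.mono m0 hs) (pν.mono m0 hs) fun t h =>
      have h' : t ∈ Icc t0 T := ⟨h.1.le, h.2.trans hs.2⟩
      pairing_deriv (symA t h') (symB t h') _ _ _ _ _
  have D0 : gam t0 ⬝ᵥ ν t0 - lam t0 ⬝ᵥ μ t0 = 0 := by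
    rw [γ0, μ0, dotProduct_neg, neg_dotProduct, dotProduct_mulVec, ← mulVec_transpose,
      transpose_eq_of_posSemidef hP0]
    ring
  have νT' : ν T = 0 := by simpa using νT
  rw [D0, sub_zero] at e1
  rcases hs.2.lt_or_eq with hsT | hsT
  · obtain ⟨-, -, elam2, lim⟩ := hlt hsT
    -- The continuous extension of `λ` from `(s,T]` to `[s,T]`.
    set y : ℝ → Fin n → ℝ := fun t => ∫ τ in t..T, hamRHS F H R gam lam τ with hy
    have iy := intervalIntegrable_of_mem_Icc ilam hs mT
    have yT : y T = 0 := by simp [hy]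
    have py : IsPrim (fun τ => -hamRHS F H R gam lam τ) y s T :=
      IsPrim.of_right hsT.le iy fun t _ => by simp [hy]
    have ys : y s = lam s - lamb := by
      have c : ContinuousOn y (uIcc s T) := intervalIntegral.continuousOn_primitive_interval_left
        (by rw [uIcc_of_le hsT.le]; exact (intervalIntegrable_iff_integrableOn_Icc_of_le hsT.le).1 iy)
      have c' : Tendsto y (nhdsWithin s (Ioc s T)) (nhds (y s)) :=
        (c s left_mem_uIcc).mono (Ioc_subset_Icc_self.trans Icc_subset_uIcc)
      rw [nhdsWithin_Ioc_eq_nhdsGT hsT] at c'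
      refine tendsto_nhds_unique c' (lim.congr' ?_)
      filter_upwards [Ioc_mem_nhdsGT hsT] with t h using elam2 t h
    obtain ⟨i2, e2⟩ := pairing_integral (l := fun t => ((H t)ᵀ * (R t)⁻¹) *ᵥ g t) hsT.le
      (pγ.mono hs mT) py (pμ.mono hs mT) (pν.mono hs mT) fun t h => by
        have h' : t ∈ Icc t0 T := ⟨hs.1.trans h.1.le, h.2⟩
        rw [show y t = lam t from (elam2 t h).symm]
        exact pairing_deriv (symA t h') (symB t h') _ _ _ _ _
    rw [← intervalIntegral.integral_add_adjacent_intervals i1 i2, e1, e2, νT', yT, ys]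
    simp only [dotProduct_zero, zero_dotProduct, sub_dotProduct]
    ring
  · subst hsT
    rw [e1, νT', heq rfl, dotProduct_zero]
    ring

end SDEKernels
end
end
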